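/- arXiv:2006.09317 — 5 statements merged into one kernel-verified Lean document; each statement's English description precedes it below -/
import Mathlib

section
/- Let A be a unital C*-algebra and let a, b ∈ A be positive elements with a·b = 0 such that the spectrum of a + b is contained in {0} ∪ [ε, ∞) for some ε > 0. Then the spectrum of a is contained in {0} ∪ [ε, ∞) and the spectrum of b is contained in {0} ∪ [ε, ∞). -/
theorem aux_spec {A : Type*} [Ring A] [Algebra ℝ A] (a b : A)
    (hab : a * b = 0) (hba : b * a = 0) (r : ℝ) (hr : r ≠ 0)
    (h : r ∉ spectrum ℝ (a + b)) : r ∉ spectrum ℝ a := by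
  rw [spectrum.notMem_iff] at h ⊢
  have e1 : (algebraMap ℝ A r - a) * (algebraMap ℝ A r - b)
      = algebraMap ℝ A r * (algebraMap ℝ A r - (a + b)) := by
    have := Algebra.commutes r a
    simp only [mul_sub, sub_mul, mul_add, hab, this]
    abel
  have hc : Commute (algebraMap ℝ A r - a) (algebraMap ℝ A r - b) := by
    have h1 : Commute a b := by rw [Commute, SemiconjBy, hab, hba]
    exact (Algebra.commute_algebraMap_left r _).sub_left
      ((Algebra.commute_algebraMap_right r a).sub_right h1)
  have hu : IsUnit ((algebraMap ℝ A r - a) * (algebraMap ℝ A r - b)) := by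
    rw [e1]
    exact ((IsUnit.mk0 r hr).map (algebraMap ℝ A)).mul h
  exact (hc.isUnit_mul_iff.mp hu).1

/-- In a unital C*-algebra, if `a` and `b` are positive (selfadjoint with
nonnegative spectrum) with `a * b = 0`, and the spectrum of `a + b` is contained in
`{0} ∪ [ε, ∞)` for some `ε > 0`, then the spectra of `a` and of `b` are both contained in
`{0} ∪ [ε, ∞)`. -/
theorem stmt_3 {A : Type*} [CStarAlgebra A] (a b : A)
    (ha : IsSelfAdjoint a) (hb : IsSelfAdjoint b)
    (ha' : spectrum ℝ a ⊆ Set.Ici 0) (hb' : spectrum ℝ b ⊆ Set.Ici 0)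
    (hab : a * b = 0)
    (ε : ℝ) (hε : 0 < ε) (hspec : spectrum ℝ (a + b) ⊆ {0} ∪ Set.Ici ε) :
    spectrum ℝ a ⊆ {0} ∪ Set.Ici ε ∧ spectrum ℝ b ⊆ {0} ∪ Set.Ici ε := by
  have hba : b * a = 0 := by
    have := congrArg star hab
    simpa [ha.star_eq, hb.star_eq] using this
  constructor
  · intro r hr
    by_cases h0 : r = 0
    · exact Or.inl h0
    · apply hspec
      by_contra h
      exact aux_spec a b hab hba r h0 h hr
  · intro r hr
    by_cases h0 : r = 0
    · exact Or.inl h0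
    · apply hspec
      by_contra h
      rw [add_comm] at h
      exact aux_spec b a hba hab r h0 h hr
end

section
/- Let A be a unital C*-algebra and let a, b ∈ A be positive elements with a·b = 0, and suppose the spectrum of a + b is contained in {0} ∪ [ε, ∞) for some ε > 0. Let p_a, p_b, p ∈ A be the projections satisfying: a·p_a = p_a·a = 0 and a + p_a is invertible; b·p_b = p_b·b = 0 and b + p_b is invertible; (a+b)·p = p·(a+b) = 0 and (a+b) + p is invertible. Then p = p_a · p_b. -/
/-- In a unital C*-algebra, let `a`, `b` be positive elements with `a * b = 0`
and suppose the spectrum of `a + b` is contained in `{0} ∪ [ε, ∞)` for some `ε > 0`.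
If `pa`, `pb`, `p` are the spectral projections at `0` of `a`, `b`, `a + b` respectively
(characterized by being projections annihilating the element whose sum with the element is
invertible), then `p = pa * pb`. -/
theorem stmt_4 {A : Type*} [CStarAlgebra A] (a b pa pb p : A)
    (ha : IsSelfAdjoint a) (hb : IsSelfAdjoint b)
    (ha' : spectrum ℝ a ⊆ Set.Ici 0) (hb' : spectrum ℝ b ⊆ Set.Ici 0)
    (hab : a * b = 0)
    (ε : ℝ) (hε : 0 < ε) (hspec : spectrum ℝ (a + b) ⊆ {0} ∪ Set.Ici ε)
    (hpa_star : star pa = pa) (hpa_idem : pa * pa = pa)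
    (hapa : a * pa = 0) (hpaa : pa * a = 0) (hainv : IsUnit (a + pa))
    (hpb_star : star pb = pb) (hpb_idem : pb * pb = pb)
    (hbpb : b * pb = 0) (hpbb : pb * b = 0) (hbinv : IsUnit (b + pb))
    (hp_star : star p = p) (hp_idem : p * p = p)
    (habp : (a + b) * p = 0) (hpab : p * (a + b) = 0) (habinv : IsUnit ((a + b) + p)) :
    p = pa * pb := by
  have left : ∀ c q x : A, q * q = q → c * q = 0 → IsUnit (c + q) → c * x = 0 → x = q * x := by
    intro c q x hq hc hu hx
    apply hu.mul_left_cancel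
    rw [add_mul, add_mul, ← mul_assoc, ← mul_assoc, hc, hq, hx, zero_mul]
  have right : ∀ c q x : A, q * q = q → q * c = 0 → IsUnit (c + q) → x * c = 0 → x = x * q := by
    intro c q x hq hc hu hx
    apply hu.mul_right_cancel
    rw [mul_add, mul_add, mul_assoc, mul_assoc, hc, hq, hx, mul_zero]
  have hba : b * a = 0 := by
    have h := congrArg star hab
    rwa [star_mul, ha.star_eq, hb.star_eq, star_zero] at h
  have hpaab : p * a = 0 := by
    have h1 : p * a * a = 0 := by
      have h := congrArg (fun z => z * a) hpab
      simpa [mul_add, add_mul, mul_assoc, hba] using h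
    have h2 := right a pa (p * a) hpa_idem hpaa hainv h1
    rw [h2, mul_assoc, hapa, mul_zero]
  have hpb0 : p * b = 0 := by
    rw [mul_add, hpaab, zero_add] at hpab
    exact hpab
  have e1 := right a pa p hpa_idem hpaa hainv hpaab
  have e2 := right b pb p hpb_idem hpbb hbinv hpb0
  have e3 := right a pa b hpa_idem hpaa hainv hba
  have h0 : (a + b) * (pa * pb) = 0 := by
    rw [add_mul, ← mul_assoc, ← mul_assoc, hapa, ← e3, hbpb, zero_mul, add_zero]
  have e4 := left (a + b) p (pa * pb) hp_idem habp habinv h0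
  rw [e4, ← mul_assoc, ← e1, ← e2]
end

section
/- Let H₁, H₂, H₃ be complex Hilbert spaces and let T : H₁ → H₂ and S : H₂ → H₃ be bounded linear operators with S ∘ T = 0. Let Δ = T T* + S* S : H₂ → H₂, where * denotes the Hilbert-space adjoint. Then there exists ε > 0 such that the spectrum of Δ is contained in {0} ∪ [ε, ∞) if and only if both the range of T and the range of S are closed subspaces. -/
open ContinuousLinearMap in
theorem aux_open {E F : Type*}
    [NormedAddCommGroup E] [InnerProductSpace ℂ E] [CompleteSpace E]
    [NormedAddCommGroup F] [InnerProductSpace ℂ F] [CompleteSpace F]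
    (T : E →L[ℂ] F) (h : IsClosed (Set.range T)) :
    ∃ C : ℝ, 0 < C ∧ ∀ x, ∃ u, T u = T x ∧ ‖u‖ ≤ C * ‖T x‖ := by
  have h' : IsClosed (T.range : Set F) := h
  have : CompleteSpace T.range := h'.completeSpace_coe
  have hs : Function.Surjective T.rangeRestrict := by
    rintro ⟨_, x, rfl⟩
    exact ⟨x, rfl⟩
  obtain ⟨C, hC, H⟩ := exists_preimage_norm_le T.rangeRestrict hs
  refine ⟨C, hC, fun x => ?_⟩
  obtain ⟨u, hu, hn⟩ := H (T.rangeRestrict x)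
  refine ⟨u, ?_, hn⟩
  exact congrArg Subtype.val hu

open ContinuousLinearMap in
theorem aux_T {E F : Type*}
    [NormedAddCommGroup E] [InnerProductSpace ℂ E] [CompleteSpace E]
    [NormedAddCommGroup F] [InnerProductSpace ℂ F] [CompleteSpace F]
    (T : E →L[ℂ] F) (h : IsClosed (Set.range T)) :
    ∃ C : ℝ, 0 < C ∧ (∀ x, ‖adjoint T x‖ ≤ C * ‖T (adjoint T x)‖) ∧
      (∀ x, ‖T x‖ ≤ C * ‖adjoint T (T x)‖) := by
  obtain ⟨C, hC, H⟩ := aux_open T h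
  refine ⟨C, hC, fun x => ?_, fun x => ?_⟩
  · obtain ⟨u, hu, hn⟩ := H (adjoint T x)
    refine le_trans ?_ hn
    have h1 : inner ℂ (adjoint T x) (adjoint T x) = inner ℂ (adjoint T x) u := by
      rw [adjoint_inner_left, adjoint_inner_left, hu]
    have h2 : ‖adjoint T x‖ * ‖adjoint T x‖ ≤ ‖adjoint T x‖ * ‖u‖ := by
      rw [← inner_self_eq_norm_mul_norm (𝕜 := ℂ), h1]
      exact (RCLike.re_le_norm _).trans (norm_inner_le_norm _ _)
    by_cases h0 : ‖adjoint T x‖ = 0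
    · rw [h0]; positivity
    · exact le_of_mul_le_mul_left h2 (lt_of_le_of_ne (norm_nonneg _) (Ne.symm h0))
  · obtain ⟨u, hu, hn⟩ := H x
    have h1 : inner ℂ (T x) (T x) = inner ℂ (adjoint T (T x)) u := by
      rw [adjoint_inner_left, hu]
    have h2 : ‖T x‖ * ‖T x‖ ≤ ‖adjoint T (T x)‖ * ‖u‖ := by
      rw [← inner_self_eq_norm_mul_norm (𝕜 := ℂ), h1]
      exact (RCLike.re_le_norm _).trans (norm_inner_le_norm _ _)
    by_cases h0 : ‖T x‖ = 0
    · rw [h0]; positivity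
    · have h3 : ‖T x‖ * ‖T x‖ ≤ ‖T x‖ * (C * ‖adjoint T (T x)‖) := by
        nlinarith [mul_le_mul_of_nonneg_left hn (norm_nonneg (adjoint T (T x)))]
      exact le_of_mul_le_mul_left h3 (lt_of_le_of_ne (norm_nonneg _) (Ne.symm h0))

open ContinuousLinearMap in
/-- For bounded operators `T : H₁ → H₂`, `S : H₂ → H₃` between complex
Hilbert spaces with `S ∘ T = 0` and Laplacian `Δ = T T* + S* S` on `H₂`, the spectrum of `Δ`
is contained in `{0} ∪ [ε, ∞)` for some `ε > 0` if and only if both `range T` and `range S`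
are closed (i.e. cohomology is reduced in the two adjacent degrees). -/
theorem stmt_7 {H₁ H₂ H₃ : Type*}
    [NormedAddCommGroup H₁] [InnerProductSpace ℂ H₁] [CompleteSpace H₁]
    [NormedAddCommGroup H₂] [InnerProductSpace ℂ H₂] [CompleteSpace H₂]
    [NormedAddCommGroup H₃] [InnerProductSpace ℂ H₃] [CompleteSpace H₃]
    (T : H₁ →L[ℂ] H₂) (S : H₂ →L[ℂ] H₃) (hST : S.comp T = 0) :
    (∃ ε : ℝ, 0 < ε ∧
        spectrum ℝ (T.comp (adjoint T) + (adjoint S).comp S) ⊆ {0} ∪ Set.Ici ε)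
      ↔ IsClosed (Set.range T) ∧ IsClosed (Set.range S) := by
  have hST' : ∀ x, S (T x) = 0 := fun x => by
    simpa using congrArg (fun f => f x) hST
  have hTS' : ∀ x, adjoint T (adjoint S x) = 0 := fun x => by
    have : (adjoint T).comp (adjoint S) = 0 := by rw [← adjoint_comp, hST]; simp
    simpa using congrArg (fun f => f x) this
  have hpos : (T.comp (adjoint T) + (adjoint S).comp S).IsPositive :=
    (isPositive_self_comp_adjoint T).add (isPositive_adjoint_comp_self S)
  set D : H₂ →L[ℂ] H₂ := T.comp (adjoint T) + (adjoint S).comp S with hD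
  have hDx : ∀ x, D x = T (adjoint T x) + adjoint S (S x) := fun x => rfl
  have hsa : IsSelfAdjoint D := hpos.isSelfAdjoint
  have hDin : ∀ x, RCLike.re (inner ℂ (D x) x) = ‖adjoint T x‖ ^ 2 + ‖S x‖ ^ 2 := fun x => by
    have e : inner ℂ (T (adjoint T x)) x = inner ℂ (adjoint T x) (adjoint T x) := by
      rw [adjoint_inner_right]
    rw [hDx, inner_add_left, map_add, adjoint_inner_left, e,
      inner_self_eq_norm_sq, inner_self_eq_norm_sq]
  constructor
  · rintro ⟨ε, hε, hs⟩
    have hcont : ContinuousOn (fun x : ℝ => x⁻¹) (spectrum ℝ D) := by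
      have hm : Continuous (fun x : ℝ => (max x ε)⁻¹ * (min (max x 0) ε / ε)) := by
        refine Continuous.mul (Continuous.inv₀ (by fun_prop) fun x => ?_) (by fun_prop)
        exact (lt_of_lt_of_le hε (le_max_right _ _)).ne'
      refine hm.continuousOn.congr fun x hx => ?_
      rcases hs hx with h | h
      · rw [Set.mem_singleton_iff] at h
        subst h
        simp [hε.le]
      · have h : ε ≤ x := h
        have h0 : 0 ≤ x := hε.le.trans h
        simp [max_eq_left h, max_eq_left h0, min_eq_right h, hε.ne']
    set G : H₂ →L[ℂ] H₂ := cfc (fun x : ℝ => x⁻¹) D with hG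
    have hDGD : D * (D * G) = D := by
      have e1 : D * G = cfc (fun x : ℝ => x * x⁻¹) D := by
        rw [cfc_mul (fun x : ℝ => x) _ D (by fun_prop) hcont, cfc_id' ℝ D]
      have hc2 : ContinuousOn (fun x : ℝ => x * x⁻¹) (spectrum ℝ D) := continuousOn_id.mul hcont
      have e2 := cfc_mul (fun x : ℝ => x) (fun x : ℝ => x * x⁻¹) D (by fun_prop) hc2
      rw [cfc_id' ℝ D] at e2
      rw [e1, ← e2]
      refine Eq.trans ?_ (cfc_id' ℝ D)
      refine cfc_congr fun x _ => ?_
      by_cases h : x = 0 <;> simp [h]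
    have hker : ∀ x, adjoint T x = adjoint T (D (G x)) ∧ S x = S (D (G x)) := fun x => by
      have h0 : D (x - D (G x)) = 0 := by
        rw [map_sub, sub_eq_zero]
        exact (congrArg (fun f => f x) hDGD).symm
      have h1 := hDin (x - D (G x))
      rw [h0, inner_zero_left, map_zero] at h1
      constructor
      · rw [← sub_eq_zero, ← map_sub, ← norm_eq_zero]
        nlinarith [sq_nonneg ‖adjoint T (x - D (G x))‖, sq_nonneg ‖S (x - D (G x))‖]
      · rw [← sub_eq_zero, ← map_sub, ← norm_eq_zero]
        nlinarith [sq_nonneg ‖adjoint T (x - D (G x))‖, sq_nonneg ‖S (x - D (G x))‖]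
    have hGT : Commute G (T.comp (adjoint T)) := by
      apply Commute.cfc_real
      ext x
      simp [hDx, hST', hTS']
    have hGS : Commute G ((adjoint S).comp S) := by
      apply Commute.cfc_real
      ext x
      simp [hDx, hST', hTS']
    have hGTx : ∀ x, G (T (adjoint T x)) = T (adjoint T (G x)) := fun x =>
      congrArg (fun f => f x) hGT.eq
    have hGSx : ∀ x, G (adjoint S (S x)) = adjoint S (S (G x)) := fun x =>
      congrArg (fun f => f x) hGS.eq
    have hGsa : IsSelfAdjoint G := cfc_predicate _ _
    constructor
    · have : Set.range T = {z | z = T (adjoint T (G z))} := by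
        ext z
        constructor
        · rintro ⟨x, rfl⟩
          show T x = T (adjoint T (G (T x)))
          rw [← hGTx]
          refine ext_inner_right ℂ fun w => ?_
          have hGi : ∀ a b, inner ℂ (G a) b = inner ℂ a (G b) := fun a b => by
            rw [← adjoint_inner_right, hGsa.adjoint_eq]
          rw [hGi, ← adjoint_inner_right, (hker w).1, hDx, map_add, hTS', add_zero,
            adjoint_inner_right]
          exact (adjoint_inner_left T _ _).symm.trans (adjoint_inner_right T _ _)
        · intro h
          exact ⟨_, h.symm⟩
      rw [this]
      exact isClosed_eq continuous_id (by fun_prop)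
    · have : Set.range S = {z | z = S (G (adjoint S z))} := by
        ext z
        constructor
        · rintro ⟨x, rfl⟩
          show S x = S (G (adjoint S (S x)))
          rw [hGSx, (hker x).2, hDx, map_add, hST', zero_add]
        · intro h
          exact ⟨_, h.symm⟩
      rw [this]
      exact isClosed_eq continuous_id (by fun_prop)
  · rintro ⟨hT, hS⟩
    obtain ⟨C, hC, hTC, -⟩ := aux_T T hT
    obtain ⟨K, hK, -, hSK⟩ := aux_T S hS
    set M := C ^ 2 + K ^ 2 with hM
    have hM0 : 0 < M := by positivity
    refine ⟨M⁻¹, by positivity, ?_⟩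
    have hineq : ∀ x, ‖adjoint T x‖ ^ 2 + ‖S x‖ ^ 2 ≤ M * ‖D x‖ ^ 2 := fun x => by
      have e : ‖D x‖ ^ 2 = ‖T (adjoint T x)‖ ^ 2 + ‖adjoint S (S x)‖ ^ 2 := by
        rw [hDx, sq, sq, sq]
        apply norm_add_sq_eq_norm_sq_add_norm_sq_of_inner_eq_zero (𝕜 := ℂ)
        rw [adjoint_inner_right, hST', inner_zero_left]
      rw [e]
      have a := pow_le_pow_left₀ (norm_nonneg _) (hTC x) 2
      have b := pow_le_pow_left₀ (norm_nonneg _) (hSK x) 2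
      have c1 : 0 ≤ K ^ 2 * ‖T (adjoint T x)‖ ^ 2 := by positivity
      have c2 : 0 ≤ C ^ 2 * ‖adjoint S (S x)‖ ^ 2 := by positivity
      rw [hM]
      nlinarith
    have hP : (0 : H₂ →L[ℂ] H₂) ≤ M • (D * D) - D := by
      rw [nonneg_iff_isPositive]
      refine ⟨?_, fun x => ?_⟩
      · have : IsSelfAdjoint (M • (D * D) - D) :=
          (IsSelfAdjoint.smul (IsSelfAdjoint.all M) (by simpa [sq] using hsa.pow 2)).sub hsa
        exact this.isSymmetric
      · have e : inner ℂ (D (D x)) x = inner ℂ (D x) (D x) := by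
          rw [← adjoint_inner_right, hsa.adjoint_eq]
        have e2 : (M • (D * D) - D) x = (M : ℂ) • D (D x) - D x := by
          simp
        rw [reApplyInnerSelf, e2, inner_sub_left, inner_smul_left, e, map_sub, hDin]
        have := hineq x
        simp only [Complex.conj_ofReal]
        have e3 : RCLike.re ((M : ℂ) * inner ℂ (D x) (D x)) = M * ‖D x‖ ^ 2 := by
          rw [← inner_self_eq_norm_sq (𝕜 := ℂ)]
          simp
        rw [e3]
        linarith
    have hcfc : M • (D * D) - D = cfc (fun x : ℝ => M * (x * x) - x) D := by
      rw [cfc_sub (fun x : ℝ => M * (x * x)) (fun x => x) D, cfc_const_mul M (fun x => x * x) D,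
        cfc_mul (fun x : ℝ => x) (fun x => x) D, cfc_id' ℝ D]
    rw [hcfc, cfc_nonneg_iff _ D] at hP
    intro x hx
    have h1 := hP x hx
    have h2 : 0 ≤ x := by
      have : 0 ≤ D := (nonneg_iff_isPositive D).2 hpos
      exact spectrum_nonneg_of_nonneg this hx
    rcases h2.eq_or_lt with h | h
    · left; exact h.symm
    · right
      show M⁻¹ ≤ x
      rw [inv_le_iff_one_le_mul₀ hM0]
      have : 0 ≤ x * (x * M - 1) := by linarith
      have := nonneg_of_mul_nonneg_right this h
      linarith
end

section
/- Let H₁ and H₂ be complex Hilbert spaces and let T : H₁ → H₂ be a bounded linear operator. Then the range of T is a closed subspace of H₂ if and only if there exists ε > 0 such that the spectrum of T* T (where * denotes the Hilbert-space adjoint) is contained in {0} ∪ [ε, ∞). -/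
open ContinuousLinearMap in
/-- For a bounded operator `T : H₁ → H₂` between complex Hilbert spaces,
the range of `T` is closed if and only if the positive operator `T* T` has a spectral gap
at `0`, i.e. its spectrum is contained in `{0} ∪ [ε, ∞)` for some `ε > 0`. -/
theorem stmt_8 {H₁ H₂ : Type*}
    [NormedAddCommGroup H₁] [InnerProductSpace ℂ H₁] [CompleteSpace H₁]
    [NormedAddCommGroup H₂] [InnerProductSpace ℂ H₂] [CompleteSpace H₂]
    (T : H₁ →L[ℂ] H₂) :
    IsClosed (Set.range T)
      ↔ ∃ ε : ℝ, 0 < ε ∧ spectrum ℝ ((adjoint T).comp T) ⊆ {0} ∪ Set.Ici ε := by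
  have hpos : ((adjoint T).comp T).IsPositive := isPositive_adjoint_comp_self T
  have hA : ∀ x, (adjoint T) (T x) = ((adjoint T).comp T) x := fun x => rfl
  have hin : ∀ x y, inner ℂ (((adjoint T).comp T) x) y = inner ℂ (T x) (T y) := fun x y => by
    rw [← hA, adjoint_inner_left]
  generalize hAdef : (adjoint T).comp T = A at *
  have hnn : 0 ≤ A := (nonneg_iff_isPositive A).2 hpos
  have hsa : IsSelfAdjoint A := hpos.isSelfAdjoint
  constructor
  · intro hc
    have hc' : IsClosed ((T.range : Submodule ℂ H₂) : Set H₂) := by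
      rw [LinearMap.coe_range]; exact hc
    have : CompleteSpace T.range := hc'.completeSpace_coe
    obtain ⟨C, hC, h⟩ := T.rangeRestrict.exists_preimage_norm_le (by
      rintro ⟨y, x, rfl⟩
      exact ⟨x, rfl⟩)
    have key : ∀ x, ‖T x‖ ≤ C * ‖A x‖ := by
      intro x
      obtain ⟨x', h1, h2⟩ := h ⟨T x, x, rfl⟩
      have h1' : T x' = T x := congrArg Subtype.val h1
      have h2' : ‖x'‖ ≤ C * ‖T x‖ := h2
      have h3 : ‖T x‖ ^ 2 ≤ ‖A x‖ * ‖x'‖ := by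
        have := norm_inner_le_norm (𝕜 := ℂ) (A x) x'
        rw [hin, h1', inner_self_eq_norm_sq_to_K] at this
        simpa using this
      rcases (norm_nonneg (T x)).eq_or_lt with h0 | h0
      · rw [← h0]; positivity
      · have : ‖A x‖ * ‖x'‖ ≤ ‖A x‖ * (C * ‖T x‖) := by gcongr
        nlinarith
    have hε : 0 < (C ^ 2)⁻¹ := by positivity
    refine ⟨(C ^ 2)⁻¹, hε, fun l hl => ?_⟩
    have hl0 : 0 ≤ l := spectrum_nonneg_of_nonneg hnn hl
    have hcfc : cfc (fun x : ℝ => x * x - (C ^ 2)⁻¹ * x) A = A * A - (C ^ 2)⁻¹ • A := by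
      rw [cfc_sub (fun x : ℝ => x * x) (fun x : ℝ => (C ^ 2)⁻¹ * x) A,
        cfc_mul (fun x : ℝ => x) (fun x : ℝ => x) A, cfc_const_mul (C ^ 2)⁻¹ (fun x : ℝ => x) A,
        cfc_id' ℝ A]
    have hge : 0 ≤ A * A - (C ^ 2)⁻¹ • A := by
      rw [nonneg_iff_isPositive, isPositive_iff_complex]
      have hs : IsSelfAdjoint (A * A - (C ^ 2)⁻¹ • A) := by
        rw [← hcfc]; exact cfc_predicate _ A
      intro x
      have e : inner ℂ ((A * A - (C ^ 2)⁻¹ • A) x) x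
          = ((‖A x‖ ^ 2 - (C ^ 2)⁻¹ * ‖T x‖ ^ 2 : ℝ) : ℂ) := by
        have e1 : inner ℂ (A (A x)) x = inner ℂ (A x) (A x) := by
          rw [hin, ← inner_conj_symm, ← hin, inner_conj_symm]
        have e2 : (A * A - (C ^ 2)⁻¹ • A) x = A (A x) - (((C ^ 2)⁻¹ : ℝ) : ℂ) • A x := by
          rw [Complex.coe_smul]; rfl
        rw [e2, inner_sub_left, inner_smul_left, e1, hin x x, inner_self_eq_norm_sq_to_K,
          inner_self_eq_norm_sq_to_K]
        simp
      rw [e]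
      refine ⟨by simp only [RCLike.re_to_complex, Complex.ofReal_re], ?_⟩
      have hk := key x
      have : ‖T x‖ ^ 2 ≤ C ^ 2 * ‖A x‖ ^ 2 := by
        rw [← mul_pow]; gcongr
      have : (C ^ 2)⁻¹ * ‖T x‖ ^ 2 ≤ ‖A x‖ ^ 2 := by
        rw [inv_mul_le_iff₀ (by positivity)]; exact this
      simp only [RCLike.re_to_complex, Complex.ofReal_re]
      linarith
    have hm : l * l - (C ^ 2)⁻¹ * l ∈ spectrum ℝ (cfc (fun x : ℝ => x * x - (C ^ 2)⁻¹ * x) A) := by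
      rw [cfc_map_spectrum (R := ℝ) (fun x : ℝ => x * x - (C ^ 2)⁻¹ * x) A]
      exact ⟨l, hl, rfl⟩
    rw [hcfc] at hm
    have := spectrum_nonneg_of_nonneg hge hm
    rcases hl0.eq_or_lt with h0 | h0
    · left; exact h0.symm
    · right
      show _ ≤ l
      nlinarith
  · rintro ⟨ε, hε, hs⟩
    have hcont : Continuous (fun x : ℝ => (max x ε)⁻¹) :=
      (continuous_id.max continuous_const).inv₀ fun x => (lt_max_of_lt_right hε).ne'
    obtain ⟨B, hB⟩ : ∃ B : H₁ →L[ℂ] H₁, A * B * A = A := by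
      refine ⟨cfc (fun x : ℝ => (max x ε)⁻¹) A, ?_⟩
      have h1 : cfc (fun x : ℝ => x * (max x ε)⁻¹ * x) A = A := by
        conv_rhs => rw [← cfc_id' ℝ A]
        refine cfc_congr fun x hx => ?_
        rcases hs hx with h | h
        · have : x = 0 := h
          simp [this]
        · have h : ε ≤ x := h
          have : x ≠ 0 := by linarith
          simp only [max_eq_left h]
          field_simp
      rw [cfc_mul (fun x : ℝ => x * (max x ε)⁻¹) (fun x : ℝ => x) A
          (continuous_id.mul hcont).continuousOn,
        cfc_mul (fun x : ℝ => x) (fun x : ℝ => (max x ε)⁻¹) A continuousOn_id hcont.continuousOn,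
        cfc_id' ℝ A] at h1
      exact h1
    have hT : ∀ x, T (B (adjoint T (T x))) = T x := by
      intro x
      have h0 : A (B (A x) - x) = 0 := by
        rw [map_sub, sub_eq_zero]
        exact congrArg (fun S : H₁ →L[ℂ] H₁ => S x) hB
      have h1 := hin (B (A x) - x) (B (A x) - x)
      rw [h0, inner_zero_left] at h1
      have h2 := inner_self_eq_zero.1 h1.symm
      rw [map_sub, sub_eq_zero] at h2
      rw [hA]; exact h2
    have : Set.range T = {y | T (B (adjoint T y)) = y} := by
      ext y
      constructor
      · rintro ⟨x, rfl⟩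
        exact hT x
      · intro h
        exact ⟨_, h⟩
    rw [this]
    exact isClosed_eq (by fun_prop) continuous_id
end

section
/- Let F be the free group on n ≥ 2 generators with free generating set S = {x₁, …, x_n}. Then the operator Δ₀ = Σ_{i=1}^{n} (2·Id − λ(x_i) − λ(x_i⁻¹)) on ℓ²(F, ℂ), where λ is the left regular representation, is invertible as a bounded operator; equivalently, 0 does not belong to the spectrum of Δ₀, so that Δ₀ has a spectral gap with trivial kernel. -/
theorem aux_head {n : ℕ} (l : Fin n × Bool) (g : FreeGroup (Fin n)) :
    (FreeGroup.mk [l] * g).toWord.head? = some l ↔ ¬ (g.toWord.head? = some (l.1, !l.2)) := by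
  have h1 : (FreeGroup.mk [l] * g).toWord = FreeGroup.reduce (l :: g.toWord) := by
    rw [FreeGroup.toWord_mul]
    simp
  have hr : FreeGroup.IsReduced g.toWord := FreeGroup.isReduced_toWord
  rw [h1, FreeGroup.reduce.cons, FreeGroup.reduce_toWord]
  obtain ⟨i, b⟩ := l
  rcases hg : g.toWord with _ | ⟨⟨j, c⟩, tl⟩
  · simp
  · rw [hg] at hr
    by_cases h : i = j ∧ b = !c
    · obtain ⟨rfl, rfl⟩ := h
      rcases tl with _ | ⟨⟨k, d⟩, tl⟩
      · simp
      · rw [FreeGroup.isReduced_cons_cons] at hr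
        have := hr.1
        simp only [Bool.not_not, and_self, if_true, List.head?_cons, Option.some.injEq,
          Prod.mk.injEq, not_true_eq_false, iff_false]
        rintro ⟨rfl, rfl⟩
        simp at this
    · simp only [h, if_false, List.head?_cons, true_iff, Option.some.injEq, Prod.mk.injEq]
      rintro ⟨rfl, rfl⟩
      simp at h

/-- the ratio weights -/
noncomputable def auxC {n : ℕ} (l : Fin n × Bool) (g : FreeGroup (Fin n)) : ℝ :=
  if g.toWord.head? = some (l.1, !l.2) then 2 else 1 / 2

theorem auxC_pos {n : ℕ} (l : Fin n × Bool) (g : FreeGroup (Fin n)) : 0 < auxC l g := by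
  unfold auxC; split_ifs <;> norm_num

theorem auxC_le {n : ℕ} (l : Fin n × Bool) (g : FreeGroup (Fin n)) : auxC l g ≤ 2 := by
  unfold auxC; split_ifs <;> norm_num

theorem auxC_mul {n : ℕ} (l : Fin n × Bool) (g : FreeGroup (Fin n)) :
    auxC l g * auxC (l.1, !l.2) (FreeGroup.mk [l] * g) = 1 := by
  have := aux_head l g
  unfold auxC
  simp only [Bool.not_not, Prod.mk.eta]
  by_cases h : g.toWord.head? = some (l.1, !l.2)
  · rw [if_pos h, if_neg (by tauto)]; norm_num
  · rw [if_neg h, if_pos (by tauto)]; norm_num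

/-- inversion of letters -/
def auxInv (n : ℕ) : Fin n × Bool ≃ Fin n × Bool where
  toFun l := (l.1, !l.2)
  invFun l := (l.1, !l.2)
  left_inv l := by simp
  right_inv l := by simp

theorem auxC_sum {n : ℕ} (g : FreeGroup (Fin n)) :
    ∑ l : Fin n × Bool, auxC l g ≤ n + 3 / 2 := by
  rw [← (auxInv n).sum_comp]
  have h : ∀ l : Fin n × Bool, auxC (auxInv n l) g
      = 1 / 2 + if g.toWord.head? = some l then 3 / 2 else 0 := by
    intro l
    simp only [auxC, auxInv, Equiv.coe_fn_mk, Bool.not_not, Prod.mk.eta]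
    split_ifs <;> norm_num
  simp_rw [h]
  rw [Finset.sum_add_distrib]
  have h2 : ∑ l : Fin n × Bool, (if g.toWord.head? = some l then (3 / 2 : ℝ) else 0) ≤ 3 / 2 := by
    rcases g.toWord.head? with _ | a
    · simp; norm_num
    · simp
  have h3 : ∑ l : Fin n × Bool, (1 / 2 : ℝ) = n := by
    simp; 
  linarith

theorem aux_bound {n : ℕ} (F : FreeGroup (Fin n) → ℝ) (hF : Summable fun g => F g ^ 2) :
    ∑' g, (∑ l : Fin n × Bool, F (FreeGroup.mk [l] * g)) ^ 2
      ≤ ((n : ℝ) + 3 / 2) ^ 2 * ∑' g, F g ^ 2 := by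
  set C : ℝ := (n : ℝ) + 3 / 2 with hC
  have hC0 : 0 ≤ C := by positivity
  -- summability of the weighted squares
  have s1 : ∀ l : Fin n × Bool, Summable fun h => F h ^ 2 * auxC l h := by
    intro l
    refine Summable.of_nonneg_of_le (fun h => mul_nonneg (sq_nonneg _) (auxC_pos l h).le)
      (fun h => mul_le_mul_of_nonneg_left (auxC_le l h) (sq_nonneg _)) (hF.mul_right 2)
  have s2 : ∀ l : Fin n × Bool, HasSum
      (fun g => F (FreeGroup.mk [l] * g) ^ 2 * auxC (auxInv n l) (FreeGroup.mk [l] * g))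
      (∑' h, F h ^ 2 * auxC (auxInv n l) h) := by
    intro l
    have := (Equiv.mulLeft (FreeGroup.mk [l])).hasSum_iff
      (f := fun h => F h ^ 2 * auxC (auxInv n l) h) (a := ∑' h, F h ^ 2 * auxC (auxInv n l) h)
    simp only [Function.comp_def, Equiv.coe_mulLeft] at this
    exact this.mpr (s1 (auxInv n l)).hasSum
  have s3 : HasSum (fun g => C * ∑ l : Fin n × Bool,
      F (FreeGroup.mk [l] * g) ^ 2 * auxC (auxInv n l) (FreeGroup.mk [l] * g))
      (C * ∑ l : Fin n × Bool, ∑' h, F h ^ 2 * auxC (auxInv n l) h) :=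
    (hasSum_sum fun l _ => s2 l).mul_left C
  have p : ∀ g, (∑ l : Fin n × Bool, F (FreeGroup.mk [l] * g)) ^ 2 ≤ C * ∑ l : Fin n × Bool,
      F (FreeGroup.mk [l] * g) ^ 2 * auxC (auxInv n l) (FreeGroup.mk [l] * g) := by
    intro g
    refine (Finset.sum_sq_le_sum_mul_sum_of_sq_le_mul Finset.univ (f := fun l => auxC l g)
      (g := fun l => F (FreeGroup.mk [l] * g) ^ 2 * auxC (auxInv n l) (FreeGroup.mk [l] * g))
      (fun l _ => (auxC_pos l g).le)
      (fun l _ => mul_nonneg (sq_nonneg _) (auxC_pos _ _).le) ?_).trans ?_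
    · intro l _
      have := auxC_mul l g
      change auxC l g * auxC (auxInv n l) _ = 1 at this
      apply le_of_eq
      linear_combination (-(F (FreeGroup.mk [l] * g) ^ 2)) * this
    · exact mul_le_mul_of_nonneg_right (auxC_sum g)
        (Finset.sum_nonneg fun l _ => mul_nonneg (sq_nonneg _) (auxC_pos _ _).le)
  have s4 := Summable.of_nonneg_of_le (fun g => sq_nonneg _) p s3.summable
  refine (s4.tsum_le_tsum p s3.summable).trans ?_
  rw [s3.tsum_eq, sq, mul_assoc]
  refine mul_le_mul_of_nonneg_left ?_ hC0
  rw [(auxInv n).sum_comp (fun l => ∑' h, F h ^ 2 * auxC l h),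
    ← Summable.tsum_finsetSum (fun l _ => s1 l), ← tsum_mul_left]
  refine Summable.tsum_le_tsum (fun h => ?_) (summable_sum fun l _ => s1 l) (hF.mul_left C)
  rw [← Finset.mul_sum, mul_comm C]
  exact mul_le_mul_of_nonneg_left (auxC_sum h) (sq_nonneg _)

theorem aux_summable {n : ℕ} (f : lp (fun _ : FreeGroup (Fin n) => ℂ) 2) :
    Summable fun g => ‖f g‖ ^ 2 := by
  have := (lp.memℓp f).summable (by norm_num)
  simpa using this

/-- translation by a letter -/
noncomputable def auxL {n : ℕ} (s : FreeGroup (Fin n)) :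
    lp (fun _ : FreeGroup (Fin n) => ℂ) 2 →ₗ[ℂ] lp (fun _ : FreeGroup (Fin n) => ℂ) 2 where
  toFun f := ⟨fun g => f (s * g), by
    refine memℓp_gen ?_
    simpa [Function.comp_def] using (Equiv.mulLeft s).summable_iff.mpr (aux_summable f)⟩
  map_add' f g := by ext; rfl
  map_smul' c f := by ext; rfl

theorem auxL_apply {n : ℕ} (s : FreeGroup (Fin n)) (f : lp (fun _ : FreeGroup (Fin n) => ℂ) 2)
    (g : FreeGroup (Fin n)) : auxL s f g = f (s * g) := rfl

theorem auxA_apply {n : ℕ} (f : lp (fun _ : FreeGroup (Fin n) => ℂ) 2) (g : FreeGroup (Fin n)) :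
    (∑ l : Fin n × Bool, auxL (FreeGroup.mk [l])) f g
      = ∑ l : Fin n × Bool, f (FreeGroup.mk [l] * g) := by
  rw [LinearMap.sum_apply, lp.coeFn_sum, Finset.sum_apply]
  rfl

theorem auxA_norm {n : ℕ} (f : lp (fun _ : FreeGroup (Fin n) => ℂ) 2) :
    ‖(∑ l : Fin n × Bool, auxL (FreeGroup.mk [l])) f‖ ≤ ((n : ℝ) + 3 / 2) * ‖f‖ := by
  refine lp.norm_le_of_tsum_le (by norm_num) (by positivity) ?_
  have hn : ‖f‖ ^ 2 = ∑' g, ‖f g‖ ^ 2 := by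
    have := lp.norm_rpow_eq_tsum (p := 2) (by norm_num) f
    simpa using this
  have key := aux_bound (fun g => ‖f g‖) (aux_summable f)
  have hle : ∀ g, ‖(∑ l : Fin n × Bool, auxL (FreeGroup.mk [l])) f g‖ ^ 2
      ≤ (∑ l : Fin n × Bool, ‖f (FreeGroup.mk [l] * g)‖) ^ 2 := by
    intro g
    rw [auxA_apply]
    gcongr
    exact norm_sum_le _ _
  simp only [ENNReal.toReal_ofNat, Real.rpow_ofNat]
  rw [mul_pow, hn]
  refine le_trans ?_ key
  refine Summable.tsum_le_tsum hle (aux_summable _) ?_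
  have h2 : ∀ g, (∑ l : Fin n × Bool, ‖f (FreeGroup.mk [l] * g)‖) ^ 2
      ≤ (Finset.univ : Finset (Fin n × Bool)).card
        * ∑ l : Fin n × Bool, ‖f (FreeGroup.mk [l] * g)‖ ^ 2 :=
    fun g => sq_sum_le_card_mul_sum_sq
  refine Summable.of_nonneg_of_le (fun g => sq_nonneg _) h2 (Summable.mul_left _ ?_)
  exact summable_sum fun l _ =>
    (Equiv.mulLeft (FreeGroup.mk [l])).summable_iff.mpr (aux_summable f)

/-- Let `F` be the free group on `n ≥ 2` generators `x₀, …, x_{n-1}`.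
The degree-0 Laplacian `Δ₀ = ∑ᵢ (2·Id - λ(xᵢ) - λ(xᵢ⁻¹))` on `ℓ²(F, ℂ)`, where `λ` is the
left regular representation (`(λ(g) f) h = f (g⁻¹ h)`), acts pointwise by
`(Δ₀ f) g = ∑ᵢ (2 f g - f (xᵢ⁻¹ g) - f (xᵢ g))`.  This bounded operator is invertible;
equivalently, `0` does not belong to its spectrum, so `Δ₀` has a spectral gap with trivial
kernel. -/
theorem stmt_12 (n : ℕ) (hn : 2 ≤ n) :
    ∃ Δ : lp (fun _ : FreeGroup (Fin n) => ℂ) 2 →L[ℂ] lp (fun _ : FreeGroup (Fin n) => ℂ) 2,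
      (∀ (f : lp (fun _ : FreeGroup (Fin n) => ℂ) 2) (g : FreeGroup (Fin n)),
        Δ f g = ∑ i : Fin n,
          ((2 : ℂ) * f g - f ((FreeGroup.of i)⁻¹ * g) - f (FreeGroup.of i * g))) ∧
      IsUnit Δ ∧ (0 : ℂ) ∉ spectrum ℂ Δ := by
  let A : lp (fun _ : FreeGroup (Fin n) => ℂ) 2 →L[ℂ] lp (fun _ : FreeGroup (Fin n) => ℂ) 2 :=
    LinearMap.mkContinuous (∑ l : Fin n × Bool, auxL (FreeGroup.mk [l])) ((n : ℝ) + 3 / 2)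
      auxA_norm
  have hA : ‖A‖ ≤ (n : ℝ) + 3 / 2 := LinearMap.mkContinuous_norm_le _ (by positivity) _
  have hn2 : (2 : ℝ) ≤ n := by exact_mod_cast hn
  have hc : (2 * n : ℂ) ≠ 0 := by
    have : n ≠ 0 := by omega
    simpa using this
  have hu : IsUnit ((2 * n : ℂ) • (1 : lp (fun _ : FreeGroup (Fin n) => ℂ) 2 →L[ℂ]
      lp (fun _ : FreeGroup (Fin n) => ℂ) 2) - A) := by
    have h1 : ‖(2 * n : ℂ)⁻¹ • A‖ < 1 := by
      rw [norm_smul, norm_inv, norm_mul]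
      simp only [RCLike.norm_ofNat, RCLike.norm_natCast]
      rw [inv_mul_lt_iff₀ (by positivity)]
      linarith
    have h2 := (Units.oneSub _ h1).isUnit
    rw [Units.val_oneSub] at h2
    have h4 : (2 * n : ℂ) • (1 : lp (fun _ : FreeGroup (Fin n) => ℂ) 2 →L[ℂ]
      lp (fun _ : FreeGroup (Fin n) => ℂ) 2) - A
        = (2 * n : ℂ) • (1 - (2 * n : ℂ)⁻¹ • A) := by
      rw [smul_sub, smul_smul, mul_inv_cancel₀ hc, one_smul]
    rw [h4]
    exact h2.smul (Units.mk0 _ hc)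
  refine ⟨_, ?_, hu, spectrum.zero_notMem_iff ℂ |>.mpr hu⟩
  intro f g
  have hAg : A f g = ∑ l : Fin n × Bool, f (FreeGroup.mk [l] * g) := auxA_apply f g
  have : ((2 * n : ℂ) • (1 : lp (fun _ : FreeGroup (Fin n) => ℂ) 2 →L[ℂ]
      lp (fun _ : FreeGroup (Fin n) => ℂ) 2) - A) f g
      = (2 * n : ℂ) * f g - A f g := rfl
  rw [this, hAg, Fintype.sum_prod_type]
  simp only [Fintype.sum_bool, Finset.sum_sub_distrib, Finset.sum_add_distrib, Finset.sum_const,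
    Finset.card_univ, Fintype.card_fin, nsmul_eq_mul]
  have e1 : ∀ i : Fin n, FreeGroup.mk [(i, true)] = FreeGroup.of i := fun _ => rfl
  have e2 : ∀ i : Fin n, FreeGroup.mk [(i, false)] = (FreeGroup.of i)⁻¹ := fun _ => rfl
  simp only [e1, e2]
  ring
end
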